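/- Fix integers n ≥ 0 and k ≥ 0. Consider formal monomials in variables ξ̄₁, ξ̄₂, … (arbitrary exponents in ℕ, finitely supported) and τ̄_j (exponents in {0,1}, finitely supported), where wt(ξ̄_i) = wt(τ̄_i) = 2^i, and RO(C₂)-degrees are recorded as pairs (a + bσ): |ξ̄_i| = (2^i − 1)(1 + σ) and |τ̄_i| = 2^i(1 + σ) − σ, with weight and degree additive on monomials. Then the assignment sending a monomial ξ̄₁^{a₁}ξ̄₂^{a₂}⋯ · τ̄_n^{ε_n}τ̄_{n+1}^{ε_{n+1}}⋯ (τ̄-indices ≥ n) of weight w ≤ k to the monomial ξ̄₁^{k−w} · ξ̄₂^{a₁}ξ̄₃^{a₂}⋯ · τ̄_{n+1}^{ε_n}τ̄_{n+2}^{ε_{n+1}}⋯ (all indices shifted up by one, with ξ̄₁-exponent k − w) is a bijection from the set of such monomials of weight at most k in ξ̄₁, ξ̄₂, … and τ̄_n, τ̄_{n+1}, … onto the set of monomials of weight exactly 2k in ξ̄₁, ξ̄₂, … and τ̄_{n+1}, τ̄_{n+2}, …; moreover this bijection raises the RO(C₂)-degree of every monomial by exactly kρ = k(1 + σ). -/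

import Mathlib

/-!
STATEMENT 11: the weight/degree bookkeeping for the isomorphism
Σ^{ρk} N_{n−1}(k) ≅ M_n(k) of the paper, at the level of monomial bases of the
C₂-equivariant dual Steenrod algebra.

A monomial in the generators ξ̄₁, ξ̄₂, … and τ̄₀, τ̄₁, … is encoded as a pair
(a, ε) of finitely supported functions ℕ →₀ ℕ, where `a i` is the exponent of
ξ̄_{i+1} and `ε i` is the exponent of τ̄_i (required to be ≤ 1).  Weights are
wt(ξ̄_i) = wt(τ̄_i) = 2^i, and RO(C₂)-degrees c + dσ are recorded as pairs
(c, d) ∈ ℤ × ℤ: |ξ̄_i| = (2^i − 1)(1 + σ) and |τ̄_i| = 2^i(1 + σ) − σ.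
-/

noncomputable section

/-- A formal monomial ξ̄₁^{a₀}ξ̄₂^{a₁}⋯ · τ̄₀^{ε₀}τ̄₁^{ε₁}⋯, encoded as the pair
(a, ε); the exponent of ξ̄_{i+1} is `a i` and the exponent of τ̄_i is `ε i`. -/
abbrev SteenrodMono : Type := (ℕ →₀ ℕ) × (ℕ →₀ ℕ)

/-- The weight of a monomial: wt(ξ̄_i) = wt(τ̄_i) = 2^i, additively. -/
def wt (M : SteenrodMono) : ℕ :=
  M.1.sum (fun i e => e * 2 ^ (i + 1)) + M.2.sum (fun i e => e * 2 ^ i)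

/-- The RO(C₂)-degree of a monomial, recorded as a pair (c, d) standing for
c + dσ: |ξ̄_i| = (2^i − 1) + (2^i − 1)σ and |τ̄_i| = 2^i + (2^i − 1)σ,
additively. -/
def deg (M : SteenrodMono) : ℤ × ℤ :=
  (M.1.sum (fun i e => (e : ℤ) * (2 ^ (i + 1) - 1)) +
      M.2.sum (fun i e => (e : ℤ) * 2 ^ i),
    M.1.sum (fun i e => (e : ℤ) * (2 ^ (i + 1) - 1)) +
      M.2.sum (fun i e => (e : ℤ) * (2 ^ i - 1)))

/-- Shift all indices of an exponent function up by one
(ξ̄_i ↦ ξ̄_{i+1}, τ̄_i ↦ τ̄_{i+1}). -/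
def shiftUp (g : ℕ →₀ ℕ) : ℕ →₀ ℕ :=
  Finsupp.embDomain ⟨Nat.succ, Nat.succ_injective⟩ g

/-- The assignment of STATEMENT 11: send a monomial of weight w ≤ k to the
monomial obtained by shifting every generator index up by one
(ξ̄_i ↦ ξ̄_{i+1}, τ̄_j ↦ τ̄_{j+1}) and multiplying by ξ̄₁^{k−w}. -/
def steenrodShift (k : ℕ) (M : SteenrodMono) : SteenrodMono :=
  (shiftUp M.1 + Finsupp.single 0 (k - wt M), shiftUp M.2)

/-- Monomials in ξ̄₁, ξ̄₂, … and τ̄_n, τ̄_{n+1}, … (τ̄-exponents at most 1,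
τ̄-indices at least n) of weight at most k. -/
def monoLE (n k : ℕ) : Set SteenrodMono :=
  { M | (∀ i, M.2 i ≤ 1) ∧ (∀ i, i < n → M.2 i = 0) ∧ wt M ≤ k }

/-- Monomials in ξ̄₁, ξ̄₂, … and τ̄_{n+1}, τ̄_{n+2}, … (τ̄-exponents at most 1,
τ̄-indices at least n+1) of weight exactly 2k. -/
def monoEq (n k : ℕ) : Set SteenrodMono :=
  { M | (∀ i, M.2 i ≤ 1) ∧ (∀ i, i < n + 1 → M.2 i = 0) ∧ wt M = 2 * k }

/-!
Since `2 ^ (i + 1) = 2 ^ i + 2 ^ i`, raising every index by one doubles the weight of a monomial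
and raises its degree by its weight times `ρ`, while `ξ̄₁` has weight `2` and degree `ρ`. Hence
the image of a monomial of weight `w ≤ k` has weight `2w + 2(k - w) = 2k`, and its degree is
higher by `wρ + (k - w)ρ = kρ`. Conversely, in a monomial of weight `2k` without `τ̄₀`, let `w` be
the weight of what remains after removing the power of `ξ̄₁` and lowering all indices; the weight
forces the exponent of `ξ̄₁` to be `k - w`.
-/

theorem shiftUp_apply_zero (g : ℕ →₀ ℕ) : shiftUp g 0 = 0 :=
  Finsupp.embDomain_of_notMem_range _ _ _ fun ⟨i, hi⟩ => Nat.succ_ne_zero i hi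

theorem shiftUp_apply_succ (g : ℕ →₀ ℕ) (i : ℕ) : shiftUp g (i + 1) = g i :=
  Finsupp.embDomain_apply_self ⟨Nat.succ, Nat.succ_injective⟩ g i

theorem sum_shiftUp {A : Type*} [AddCommMonoid A] (g : ℕ →₀ ℕ) (f : ℕ → ℕ → A) :
    (shiftUp g).sum f = g.sum fun i e => f (i + 1) e :=
  Finsupp.sum_embDomain

/-- Shift all indices of an exponent function down by one, discarding the exponent at index `0`;
a left inverse of `shiftUp`. -/
def shiftDown (g : ℕ →₀ ℕ) : ℕ →₀ ℕ :=
  Finsupp.comapDomain Nat.succ g Nat.succ_injective.injOn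

theorem shiftDown_apply (g : ℕ →₀ ℕ) (i : ℕ) : shiftDown g i = g (i + 1) :=
  rfl

theorem shiftDown_shiftUp_add_single (g : ℕ →₀ ℕ) (c : ℕ) :
    shiftDown (shiftUp g + Finsupp.single 0 c) = g := by
  ext i
  simp [shiftDown_apply, shiftUp_apply_succ]

theorem shiftUp_shiftDown_add_single (g : ℕ →₀ ℕ) :
    shiftUp (shiftDown g) + Finsupp.single 0 (g 0) = g := by
  ext i
  cases i with
  | zero => simp [shiftUp_apply_zero]
  | succ i => simp [shiftUp_apply_succ, shiftDown_apply]

/-- The substitution `ξ̄_i ↦ ξ̄_{i+1}`, `τ̄_i ↦ τ̄_{i+1}` on monomials. -/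
def shiftGenerators (M : SteenrodMono) : SteenrodMono :=
  (shiftUp M.1, shiftUp M.2)

/-- The substitution `ξ̄_{i+1} ↦ ξ̄_i`, `τ̄_{i+1} ↦ τ̄_i` on monomials, with `ξ̄₁` and `τ̄₀` sent
to `1`; it gives the inverse of `steenrodShift`. -/
def unshiftGenerators (M : SteenrodMono) : SteenrodMono :=
  (shiftDown M.1, shiftDown M.2)

/-- The monomial `ξ̄₁ ^ c`. Exponents are written additively, so multiplying by it is adding it. -/
def xiOnePow (c : ℕ) : SteenrodMono :=
  (Finsupp.single 0 c, 0)

theorem steenrodShift_eq_shiftGenerators_add (k : ℕ) (M : SteenrodMono) :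
    steenrodShift k M = shiftGenerators M + xiOnePow (k - wt M) := by
  simp [steenrodShift, shiftGenerators, xiOnePow]

theorem unshiftGenerators_shiftGenerators_add (M : SteenrodMono) (c : ℕ) :
    unshiftGenerators (shiftGenerators M + xiOnePow c) = M :=
  Prod.ext (shiftDown_shiftUp_add_single M.1 c) <| by
    simpa [unshiftGenerators, shiftGenerators, xiOnePow] using
      shiftDown_shiftUp_add_single M.2 0

theorem shiftGenerators_unshiftGenerators_add {M : SteenrodMono} (hM : M.2 0 = 0) :
    shiftGenerators (unshiftGenerators M) + xiOnePow (M.1 0) = M :=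
  Prod.ext (shiftUp_shiftDown_add_single M.1) <| by
    simpa [unshiftGenerators, shiftGenerators, xiOnePow, hM] using
      shiftUp_shiftDown_add_single M.2

theorem wt_add (M N : SteenrodMono) : wt (M + N) = wt M + wt N := by
  simp only [wt, Prod.fst_add, Prod.snd_add]
  rw [Finsupp.sum_add_index' (by simp) (by intros; ring),
    Finsupp.sum_add_index' (by simp) (by intros; ring)]
  ring

theorem deg_add (M N : SteenrodMono) : deg (M + N) = deg M + deg N := by
  simp only [deg, Prod.fst_add, Prod.snd_add, Prod.mk_add_mk]
  rw [Finsupp.sum_add_index' (by simp) (by intros; push_cast; ring),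
    Finsupp.sum_add_index' (by simp) (by intros; push_cast; ring),
    Finsupp.sum_add_index' (by simp) (by intros; push_cast; ring)]
  ext <;> simp only <;> ring

theorem wt_xiOnePow (c : ℕ) : wt (xiOnePow c) = 2 * c := by
  simp [wt, xiOnePow, mul_comm]

theorem deg_xiOnePow (c : ℕ) : deg (xiOnePow c) = ((c : ℤ), (c : ℤ)) := by
  simp [deg, xiOnePow]

theorem wt_shiftGenerators (M : SteenrodMono) : wt (shiftGenerators M) = 2 * wt M := by
  simp only [wt, shiftGenerators, sum_shiftUp, mul_add, Finsupp.mul_sum]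
  exact congrArg₂ (· + ·) (Finsupp.sum_congr fun i _ => by ring)
    (Finsupp.sum_congr fun i _ => by ring)

theorem deg_shiftGenerators (M : SteenrodMono) :
    deg (shiftGenerators M) = deg M + ((wt M : ℤ), (wt M : ℤ)) := by
  have wt_cast : (wt M : ℤ) =
      M.1.sum (fun i e => (e : ℤ) * 2 ^ (i + 1)) + M.2.sum fun i e => (e : ℤ) * 2 ^ i := by
    simp [wt, Finsupp.sum]
  simp only [deg, shiftGenerators, sum_shiftUp, wt_cast, Prod.mk_add_mk]
  congr 1 <;>
  · rw [add_add_add_comm, ← Finsupp.sum_add, ← Finsupp.sum_add]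
    exact congrArg₂ (· + ·) (Finsupp.sum_congr fun i _ => by ring)
      (Finsupp.sum_congr fun i _ => by ring)

theorem wt_steenrodShift {k : ℕ} {M : SteenrodMono} (hM : wt M ≤ k) :
    wt (steenrodShift k M) = 2 * k := by
  rw [steenrodShift_eq_shiftGenerators_add, wt_add, wt_shiftGenerators, wt_xiOnePow, ← mul_add,
    Nat.add_sub_cancel' hM]

theorem deg_steenrodShift {k : ℕ} {M : SteenrodMono} (hM : wt M ≤ k) :
    deg (steenrodShift k M) = deg M + ((k : ℤ), (k : ℤ)) := by
  rw [steenrodShift_eq_shiftGenerators_add, deg_add, deg_shiftGenerators, deg_xiOnePow, add_assoc]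
  simp only [Prod.mk_add_mk, ← Nat.cast_add, Nat.add_sub_cancel' hM]

theorem wt_eq_two_mul_wt_unshiftGenerators_add {M : SteenrodMono} (hM : M.2 0 = 0) :
    wt M = 2 * (wt (unshiftGenerators M) + M.1 0) := by
  conv_lhs => rw [← shiftGenerators_unshiftGenerators_add hM]
  rw [wt_add, wt_shiftGenerators, wt_xiOnePow, mul_add]

theorem unshiftGenerators_steenrodShift (k : ℕ) (M : SteenrodMono) :
    unshiftGenerators (steenrodShift k M) = M := by
  rw [steenrodShift_eq_shiftGenerators_add, unshiftGenerators_shiftGenerators_add]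

theorem steenrodShift_unshiftGenerators {k : ℕ} {M : SteenrodMono} (hτ : M.2 0 = 0)
    (hwt : wt M = 2 * k) : steenrodShift k (unshiftGenerators M) = M := by
  have hexp : k - wt (unshiftGenerators M) = M.1 0 := by
    have := wt_eq_two_mul_wt_unshiftGenerators_add hτ
    omega
  rw [steenrodShift_eq_shiftGenerators_add, hexp, shiftGenerators_unshiftGenerators_add hτ]

theorem mapsTo_steenrodShift (n k : ℕ) :
    Set.MapsTo (steenrodShift k) (monoLE n k) (monoEq n k) := by
  rintro M ⟨hle, hlt, hwt⟩
  refine ⟨fun i => ?_, fun i hi => ?_, wt_steenrodShift hwt⟩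
  · cases i with
    | zero => exact (shiftUp_apply_zero M.2).trans_le zero_le_one
    | succ i => exact (shiftUp_apply_succ M.2 i).trans_le (hle i)
  · cases i with
    | zero => exact shiftUp_apply_zero M.2
    | succ i => exact (shiftUp_apply_succ M.2 i).trans (hlt i (Nat.lt_of_succ_lt_succ hi))

theorem mapsTo_unshiftGenerators (n k : ℕ) :
    Set.MapsTo unshiftGenerators (monoEq n k) (monoLE n k) := by
  rintro M ⟨hle, hlt, hwt⟩
  refine ⟨fun i => hle (i + 1), fun i hi => hlt (i + 1) (Nat.succ_lt_succ hi), ?_⟩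
  have := wt_eq_two_mul_wt_unshiftGenerators_add (hlt 0 n.succ_pos)
  omega

theorem invOn_unshiftGenerators_steenrodShift (n k : ℕ) :
    Set.InvOn unshiftGenerators (steenrodShift k) (monoLE n k) (monoEq n k) :=
  ⟨fun M _ => unshiftGenerators_steenrodShift k M,
    fun _ ⟨_, hlt, hwt⟩ => steenrodShift_unshiftGenerators (hlt 0 n.succ_pos) hwt⟩

/-- for all n ≥ 0 and k ≥ 0, the assignment
ξ̄₁^{a₁}ξ̄₂^{a₂}⋯ τ̄_n^{ε_n}τ̄_{n+1}^{ε_{n+1}}⋯ ↦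
ξ̄₁^{k−w} ξ̄₂^{a₁}ξ̄₃^{a₂}⋯ τ̄_{n+1}^{ε_n}τ̄_{n+2}^{ε_{n+1}}⋯ (w the weight) is a
bijection from the monomials of weight at most k with τ̄-indices ≥ n onto the
monomials of weight exactly 2k with τ̄-indices ≥ n+1, and it raises the
RO(C₂)-degree of every monomial by exactly kρ = k(1 + σ) = (k, k). -/
theorem steenrodShift_bijOn_and_deg (n k : ℕ) :
    Set.BijOn (steenrodShift k) (monoLE n k) (monoEq n k) ∧
      ∀ M ∈ monoLE n k, deg (steenrodShift k M) = deg M + ((k : ℤ), (k : ℤ)) :=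
  ⟨(invOn_unshiftGenerators_steenrodShift n k).bijOn (mapsTo_steenrodShift n k)
      (mapsTo_unshiftGenerators n k),
    fun _ ⟨_, _, hwt⟩ => deg_steenrodShift hwt⟩

end
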